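/- arXiv:2301.10037 — 12 statements merged into one kernel-verified Lean document; each statement's English description precedes it below -/
import Mathlib

section
/- Soundness of Hyper Hoare Logic: for all hyper-assertions P, Q and every command C, if ⊢ {P} C {Q} is derivable in the core proof system, then the hyper-triple ⊨ {P} C {Q} is valid. -/
/-- Commands of the programming language. -/
inductive Cmd (PVar PVal : Type) : Type where
  | skip : Cmd PVar PVal
  | assign : PVar → ((PVar → PVal) → PVal) → Cmd PVar PVal
  | havoc : PVar → Cmd PVar PVal
  | assume : ((PVar → PVal) → Prop) → Cmd PVar PVal
  | seq : Cmd PVar PVal → Cmd PVar PVal → Cmd PVar PVal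
  | choice : Cmd PVar PVal → Cmd PVar PVal → Cmd PVar PVal
  | iter : Cmd PVar PVal → Cmd PVar PVal

/-- Big-step semantics ⟨C, σ⟩ → σ'. -/
inductive BigStep {PVar PVal : Type} [DecidableEq PVar] :
    Cmd PVar PVal → (PVar → PVal) → (PVar → PVal) → Prop where
  | skip (σ : PVar → PVal) : BigStep Cmd.skip σ σ
  | assign (x : PVar) (e : (PVar → PVal) → PVal) (σ : PVar → PVal) :
      BigStep (Cmd.assign x e) σ (Function.update σ x (e σ))
  | havoc (x : PVar) (σ : PVar → PVal) (v : PVal) :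
      BigStep (Cmd.havoc x) σ (Function.update σ x v)
  | assume {b : (PVar → PVal) → Prop} {σ : PVar → PVal} (h : b σ) :
      BigStep (Cmd.assume b) σ σ
  | seq {C1 C2 : Cmd PVar PVal} {σ σ' σ'' : PVar → PVal} :
      BigStep C1 σ σ' → BigStep C2 σ' σ'' → BigStep (Cmd.seq C1 C2) σ σ''
  | choiceL {C1 C2 : Cmd PVar PVal} {σ σ' : PVar → PVal} :
      BigStep C1 σ σ' → BigStep (Cmd.choice C1 C2) σ σ'
  | choiceR {C1 C2 : Cmd PVar PVal} {σ σ' : PVar → PVal} :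
      BigStep C2 σ σ' → BigStep (Cmd.choice C1 C2) σ σ'
  | iterNil {C : Cmd PVar PVal} {σ : PVar → PVal} : BigStep (Cmd.iter C) σ σ
  | iterCons {C : Cmd PVar PVal} {σ σ' σ'' : PVar → PVal} :
      BigStep C σ σ' → BigStep (Cmd.iter C) σ' σ'' → BigStep (Cmd.iter C) σ σ''

/-- Extended states: a logical state paired with a program state. -/
abbrev EState (PVar PVal LVar LVal : Type) : Type :=
  (LVar → LVal) × (PVar → PVal)

/-- Extended semantics of a command on a set of extended states. -/
def sem {PVar PVal LVar LVal : Type} [DecidableEq PVar] (C : Cmd PVar PVal)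
    (S : Set (EState PVar PVal LVar LVal)) : Set (EState PVar PVal LVar LVal) :=
  { φ | ∃ σ : PVar → PVal, (φ.1, σ) ∈ S ∧ BigStep C σ φ.2 }

/-- Hyper-assertions: predicates over sets of extended states. -/
abbrev HAssn (PVar PVal LVar LVal : Type) : Type :=
  Set (EState PVar PVal LVar LVal) → Prop

/-- Validity of a hyper-triple ⊨ {P} C {Q}. -/
def HyperTriple {PVar PVal LVar LVal : Type} [DecidableEq PVar]
    (P : HAssn PVar PVal LVar LVal) (C : Cmd PVar PVal)
    (Q : HAssn PVar PVal LVar LVal) : Prop :=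
  ∀ S : Set (EState PVar PVal LVar LVal), P S → Q (sem C S)

/-- The ⊗ operator on hyper-assertions. -/
def otimes {PVar PVal LVar LVal : Type} (Q1 Q2 : HAssn PVar PVal LVar LVal) :
    HAssn PVar PVal LVar LVal :=
  fun S => ∃ S1 S2, S = S1 ∪ S2 ∧ Q1 S1 ∧ Q2 S2

/-- The ⨂_{n ∈ ℕ} operator on indexed families of hyper-assertions. -/
def bigotimes {PVar PVal LVar LVal : Type} (I : ℕ → HAssn PVar PVal LVar LVal) :
    HAssn PVar PVal LVar LVal :=
  fun S => ∃ f : ℕ → Set (EState PVar PVal LVar LVal),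
    S = (⋃ n, f n) ∧ ∀ n, I n (f n)

/-- The core proof system of Hyper Hoare Logic: ⊢ {P} C {Q}. -/
inductive Derivable {PVar PVal LVar LVal : Type} [DecidableEq PVar] :
    HAssn PVar PVal LVar LVal → Cmd PVar PVal → HAssn PVar PVal LVar LVal → Prop where
  | skip (P : HAssn PVar PVal LVar LVal) : Derivable P Cmd.skip P
  | seq {P R Q : HAssn PVar PVal LVar LVal} {C1 C2 : Cmd PVar PVal} :
      Derivable P C1 R → Derivable R C2 Q → Derivable P (Cmd.seq C1 C2) Q
  | choice {P Q1 Q2 : HAssn PVar PVal LVar LVal} {C1 C2 : Cmd PVar PVal} :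
      Derivable P C1 Q1 → Derivable P C2 Q2 →
      Derivable P (Cmd.choice C1 C2) (otimes Q1 Q2)
  | iter {C : Cmd PVar PVal} (I : ℕ → HAssn PVar PVal LVar LVal) :
      (∀ n, Derivable (I n) C (I (n + 1))) →
      Derivable (I 0) (Cmd.iter C) (bigotimes I)
  | cons {P P' Q Q' : HAssn PVar PVal LVar LVal} {C : Cmd PVar PVal} :
      (∀ S, P S → P' S) → (∀ S, Q' S → Q S) → Derivable P' C Q' → Derivable P C Q
  | exist {α : Type} {C : Cmd PVar PVal} (P Q : α → HAssn PVar PVal LVar LVal) :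
      (∀ x : α, Derivable (P x) C (Q x)) →
      Derivable (fun S => ∃ x, P x S) C (fun S => ∃ x, Q x S)
  | assume (P : HAssn PVar PVal LVar LVal) (b : (PVar → PVal) → Prop) :
      Derivable (fun S => P { φ ∈ S | b φ.2 }) (Cmd.assume b) P
  | assign (P : HAssn PVar PVal LVar LVal) (x : PVar) (e : (PVar → PVal) → PVal) :
      Derivable
        (fun S => P { φ | ∃ α ∈ S, φ.1 = α.1 ∧ φ.2 = Function.update α.2 x (e α.2) })
        (Cmd.assign x e) P
  | havoc (P : HAssn PVar PVal LVar LVal) (x : PVar) :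
      Derivable
        (fun S => P { φ | ∃ α ∈ S, ∃ v, φ.1 = α.1 ∧ φ.2 = Function.update α.2 x v })
        (Cmd.havoc x) P

theorem iter_mem_aux {PVar PVal LVar LVal : Type} [DecidableEq PVar]
    {C D : Cmd PVar PVal} {σ τ : PVar → PVal} (h : BigStep D σ τ) (hD : D = Cmd.iter C)
    (S : Set (EState PVar PVal LVar LVal)) (l : LVar → LVal) (n : ℕ)
    (hm : (l, σ) ∈ (sem C)^[n] S) : ∃ m, (l, τ) ∈ (sem C)^[m] S := by
  induction h generalizing n with
  | iterNil => exact ⟨n, hm⟩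
  | iterCons h1 _ _ ih2 =>
    cases hD
    refine ih2 rfl (n + 1) ?_
    rw [Function.iterate_succ_apply']
    exact ⟨_, hm, h1⟩
  | _ => cases hD

theorem BigStep.iter_snoc {PVar PVal : Type} [DecidableEq PVar]
    {C D : Cmd PVar PVal} {σ τ ρ : PVar → PVal} (h : BigStep D σ τ) (hD : D = Cmd.iter C)
    (h2 : BigStep C τ ρ) : BigStep (Cmd.iter C) σ ρ := by
  induction h with
  | iterNil => exact .iterCons h2 .iterNil
  | iterCons h1 _ _ ih2 =>
    cases hD
    exact .iterCons h1 (ih2 rfl h2)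
  | _ => cases hD

theorem sem_iter {PVar PVal LVar LVal : Type} [DecidableEq PVar]
    (C : Cmd PVar PVal) (S : Set (EState PVar PVal LVar LVal)) :
    sem (Cmd.iter C) S = ⋃ n, (sem C)^[n] S := by
  ext ⟨l, τ⟩
  rw [Set.mem_iUnion]
  constructor
  · rintro ⟨σ, hσ, h⟩
    exact iter_mem_aux h rfl S l 0 hσ
  · rintro ⟨n, hn⟩
    induction n generalizing τ with
    | zero => exact ⟨τ, hn, .iterNil⟩
    | succ n ih =>
      rw [Function.iterate_succ_apply'] at hn
      obtain ⟨σ, hσ, h⟩ := hn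
      obtain ⟨ρ, hρ, h'⟩ := ih σ hσ
      exact ⟨ρ, hρ, h'.iter_snoc rfl h⟩

/-- Soundness of Hyper Hoare Logic. -/
theorem hyper_hoare_logic_soundness {PVar PVal LVar LVal : Type} [DecidableEq PVar]
    (P Q : HAssn PVar PVal LVar LVal) (C : Cmd PVar PVal)
    (h : Derivable P C Q) : HyperTriple P C Q := by
  induction h with
  | skip P =>
    intro S hS
    convert hS using 1
    ext ⟨l, τ⟩
    constructor
    · rintro ⟨σ, hσ, h⟩
      cases h
      exact hσ
    · intro h
      exact ⟨τ, h, .skip _⟩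
  | @seq P R Q C1 C2 _ _ ih1 ih2 =>
    intro S hS
    have h := ih2 _ (ih1 _ hS)
    convert h using 1
    ext ⟨l, τ⟩
    constructor
    · rintro ⟨σ, hσ, h⟩
      cases h with
      | @seq _ _ _ ρ _ h1 h2 => exact ⟨ρ, ⟨σ, hσ, h1⟩, h2⟩
    · rintro ⟨ρ, ⟨σ, hσ, h1⟩, h2⟩
      exact ⟨σ, hσ, .seq h1 h2⟩
  | choice _ _ ih1 ih2 =>
    intro S hS
    refine ⟨_, _, ?_, ih1 _ hS, ih2 _ hS⟩
    ext ⟨l, τ⟩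
    constructor
    · rintro ⟨σ, hσ, h⟩
      cases h with
      | choiceL h => exact .inl ⟨_, hσ, h⟩
      | choiceR h => exact .inr ⟨_, hσ, h⟩
    · rintro (⟨σ, hσ, h⟩ | ⟨σ, hσ, h⟩)
      · exact ⟨σ, hσ, .choiceL h⟩
      · exact ⟨σ, hσ, .choiceR h⟩
  | @iter C I _ ih =>
    intro S hS
    refine ⟨fun n => (sem C)^[n] S, sem_iter C S, fun n => ?_⟩
    induction n with
    | zero => exact hS
    | succ n ihn =>
      have := ih n _ ihn
      simpa only [Function.iterate_succ_apply'] using this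
  | cons hP hQ _ ih => exact fun S hS => hQ _ (ih _ (hP _ hS))
  | exist P Q _ ih =>
    rintro S ⟨x, hx⟩
    exact ⟨x, ih x S hx⟩
  | assume P b =>
    intro S hS
    convert hS using 1
    ext ⟨l, τ⟩
    constructor
    · rintro ⟨σ, hσ, h⟩
      cases h with
      | assume hb => exact ⟨hσ, hb⟩
    · rintro ⟨h, hb⟩
      exact ⟨τ, h, .assume hb⟩
  | assign P x e =>
    intro S hS
    convert hS using 1
    ext ⟨l, τ⟩
    constructor
    · rintro ⟨σ, hσ, h⟩
      generalize hτ : (l, τ).2 = τ' at h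
      cases h
      exact ⟨_, hσ, rfl, hτ⟩
    · rintro ⟨⟨l', σ⟩, hσ, h1, h2⟩
      dsimp only at h1 h2
      subst h1 h2
      exact ⟨σ, hσ, .assign x e σ⟩
  | havoc P x =>
    intro S hS
    convert hS using 1
    ext ⟨l, τ⟩
    constructor
    · rintro ⟨σ, hσ, h⟩
      generalize hτ : (l, τ).2 = τ' at h
      cases h
      exact ⟨_, hσ, _, rfl, hτ⟩
    · rintro ⟨⟨l', σ⟩, hσ, v, h1, h2⟩
      dsimp only at h1 h2
      subst h1 h2
      exact ⟨σ, hσ, .havoc x σ v⟩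
end

section
/- Completeness of Hyper Hoare Logic: for all hyper-assertions P, Q and every command C, if the hyper-triple ⊨ {P} C {Q} is valid, then ⊢ {P} C {Q} is derivable in the core proof system. -/
theorem sem_iter_eq {PVar PVal LVar LVal : Type} [DecidableEq PVar]
    (C : Cmd PVar PVal) (S : Set (EState PVar PVal LVar LVal)) :
    sem (Cmd.iter C) S = ⋃ n : ℕ, (sem C)^[n] S := by
  have h1 : ∀ (D : Cmd PVar PVal) (σ σ' : PVar → PVal), BigStep D σ σ' → D = Cmd.iter C →
      ∀ (l : LVar → LVal) (S : Set (EState PVar PVal LVar LVal)), (l, σ) ∈ S →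
        ∃ n : ℕ, (l, σ') ∈ (sem C)^[n] S := by
    intro D σ σ' hb
    induction hb with
    | iterNil => intro _ l S hS; exact ⟨0, hS⟩
    | iterCons hc _ _ ih =>
      intro hD l S hS
      cases hD
      obtain ⟨n, hn⟩ := ih rfl l (sem C S) ⟨_, hS, hc⟩
      exact ⟨n + 1, by simpa [Function.iterate_succ] using hn⟩
    | _ => intro hD; cases hD
  have h2 : ∀ (n : ℕ) (S : Set (EState PVar PVal LVar LVal)),
      (sem C)^[n] S ⊆ sem (Cmd.iter C) S := by
    intro n
    induction n with
    | zero => intro S φ hφ; exact ⟨φ.2, hφ, BigStep.iterNil⟩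
    | succ n ih =>
      intro S φ hφ
      rw [Function.iterate_succ_apply] at hφ
      obtain ⟨σ, ⟨τ, hτ, hb⟩, hi⟩ := ih _ hφ
      exact ⟨τ, hτ, BigStep.iterCons hb hi⟩
  apply Set.Subset.antisymm
  · rintro ⟨l, σ'⟩ ⟨σ, hS, hb⟩
    exact Set.mem_iUnion.2 (h1 _ _ _ hb rfl l S hS)
  · exact Set.iUnion_subset fun n => h2 n S

theorem derivable_exact {PVar PVal LVar LVal : Type} [DecidableEq PVar]
    (C : Cmd PVar PVal) : ∀ S₀ : Set (EState PVar PVal LVar LVal),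
      Derivable (fun S => S = S₀) C (fun S => S = sem C S₀) := by
  induction C with
  | skip =>
    intro S₀
    refine Derivable.cons (fun _ h => h) ?_ (Derivable.skip _)
    rintro S rfl
    ext ⟨l, σ⟩
    constructor
    · intro h; exact ⟨σ, h, BigStep.skip σ⟩
    · rintro ⟨τ, h, hb⟩; cases hb; exact h
  | assign x e =>
    intro S₀
    refine Derivable.cons ?_ (fun _ h => h) (Derivable.assign _ x e)
    rintro S rfl
    ext ⟨l, σ⟩
    constructor
    · rintro ⟨⟨l', τ⟩, h, h1, h2⟩
      dsimp only at h1 h2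
      subst h1 h2
      exact ⟨τ, h, BigStep.assign x e τ⟩
    · rintro ⟨τ, h, hb⟩
      dsimp only at hb
      cases hb; exact ⟨(l, τ), h, rfl, rfl⟩
  | havoc x =>
    intro S₀
    refine Derivable.cons ?_ (fun _ h => h) (Derivable.havoc _ x)
    rintro S rfl
    ext ⟨l, σ⟩
    constructor
    · rintro ⟨⟨l', τ⟩, h, v, h1, h2⟩
      dsimp only at h1 h2
      subst h1 h2
      exact ⟨τ, h, BigStep.havoc x τ v⟩
    · rintro ⟨τ, h, hb⟩
      dsimp only at hb
      cases hb; exact ⟨(l, τ), h, _, rfl, rfl⟩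
  | assume b =>
    intro S₀
    refine Derivable.cons ?_ (fun _ h => h) (Derivable.assume _ b)
    rintro S rfl
    ext ⟨l, σ⟩
    constructor
    · rintro ⟨h, hb⟩; exact ⟨σ, h, BigStep.assume hb⟩
    · rintro ⟨τ, h, hb⟩
      dsimp only at hb
      cases hb with
      | assume hb => exact ⟨h, hb⟩
  | seq C1 C2 ih1 ih2 =>
    intro S₀
    refine Derivable.cons (fun _ h => h) ?_ (Derivable.seq (ih1 S₀) (ih2 _))
    rintro S rfl
    ext ⟨l, σ⟩
    constructor
    · rintro ⟨τ, ⟨ρ, h, h1⟩, h2⟩; exact ⟨ρ, h, BigStep.seq h1 h2⟩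
    · rintro ⟨τ, h, hb⟩
      cases hb with
      | @seq _ _ _ ρ _ h1 h2 => exact ⟨ρ, ⟨τ, h, h1⟩, h2⟩
  | choice C1 C2 ih1 ih2 =>
    intro S₀
    refine Derivable.cons (fun _ h => h) ?_ (Derivable.choice (ih1 S₀) (ih2 S₀))
    rintro S ⟨_, _, rfl, rfl, rfl⟩
    ext ⟨l, σ⟩
    constructor
    · rintro (⟨τ, h, hb⟩ | ⟨τ, h, hb⟩)
      · exact ⟨τ, h, BigStep.choiceL hb⟩
      · exact ⟨τ, h, BigStep.choiceR hb⟩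
    · rintro ⟨τ, h, hb⟩
      cases hb with
      | choiceL hb => exact Or.inl ⟨τ, h, hb⟩
      | choiceR hb => exact Or.inr ⟨τ, h, hb⟩
  | iter C ih =>
    intro S₀
    refine Derivable.cons (P' := (fun (n : ℕ) S => S = (sem C)^[n] S₀) 0) (fun _ h => h) ?_
      (Derivable.iter (fun (n : ℕ) S => S = (sem C)^[n] S₀) ?_)
    · rintro S ⟨f, rfl, hf⟩
      rw [sem_iter_eq]
      exact Set.iUnion_congr hf
    · intro n
      simp only [Function.iterate_succ_apply']
      exact ih _

/-- Completeness of Hyper Hoare Logic. -/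
theorem hyper_hoare_logic_completeness {PVar PVal LVar LVal : Type} [DecidableEq PVar]
    (P Q : HAssn PVar PVal LVar LVal) (C : Cmd PVar PVal)
    (h : HyperTriple P C Q) : Derivable P C Q := by
  refine Derivable.cons ?_ ?_ (Derivable.exist (α := {S // P S})
    (fun x S => S = x.1) (fun x S => S = sem C x.1) fun x => derivable_exact C x.1)
  · intro S hS; exact ⟨⟨S, hS⟩, rfl⟩
  · rintro S ⟨x, rfl⟩; exact h _ x.2
end

section
/- Expressing Cartesian Hoare Logic in Hyper Hoare Logic: let k ≥ 1, let t ∈ LVars, assume LVals contains k distinct values denoted 1, …, k, and let P and Q be sets of k-tuples of extended states that are insensitive to t. Define P'(S) := for all k-tuples φ⃗ of extended states, if for every i ∈ {1,…,k} we have φ_i ∈ S and φ_i^L(t) = i, then φ⃗ ∈ P; and define Q'(S) analogously with Q. Then for every command C, ⊨_CHL(k) {P} C {Q} holds if and only if the hyper-triple ⊨ {P'} C {Q'} holds. -/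
/-- Lifting of the big-step semantics to k-tuples of extended states:
each component executes C, and logical states are unchanged. -/
def KStep {PVar PVal LVar LVal : Type} [DecidableEq PVar] {k : ℕ} (C : Cmd PVar PVal)
    (φs φs' : Fin k → EState PVar PVal LVar LVal) : Prop :=
  ∀ i : Fin k, BigStep C (φs i).2 (φs' i).2 ∧ (φs i).1 = (φs' i).1

/-- A set of k-tuples of extended states is insensitive to the logical variable t iff
membership is unchanged when the values of t in the logical states of any components
are replaced by arbitrary values. -/
def Insensitive {PVar PVal LVar LVal : Type} [DecidableEq LVar] {k : ℕ} (t : LVar)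
    (T : Set (Fin k → EState PVar PVal LVar LVal)) : Prop :=
  ∀ (φs : Fin k → EState PVar PVal LVar LVal) (g : Fin k → LVal),
    φs ∈ T ↔ (fun i => (Function.update (φs i).1 t (g i), (φs i).2)) ∈ T

/-- Cartesian Hoare Logic triples over sets of k-tuples of extended states. -/
def CHLTriple {PVar PVal LVar LVal : Type} [DecidableEq PVar] {k : ℕ}
    (P : Set (Fin k → EState PVar PVal LVar LVal)) (C : Cmd PVar PVal)
    (Q : Set (Fin k → EState PVar PVal LVar LVal)) : Prop :=
  ∀ φs ∈ P, ∀ φs', KStep C φs φs' → φs' ∈ Q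

/-- Expressing Cartesian Hoare Logic in Hyper Hoare Logic. -/
theorem expressing_CHL_in_HHL {PVar PVal LVar LVal : Type}
    [DecidableEq PVar] [DecidableEq LVar]
    (k : ℕ) (hk : 1 ≤ k) (t : LVar)
    (num : Fin k → LVal) (hnum : Function.Injective num)
    (P Q : Set (Fin k → EState PVar PVal LVar LVal))
    (hPt : Insensitive t P) (hQt : Insensitive t Q)
    (C : Cmd PVar PVal) :
    CHLTriple P C Q ↔
      HyperTriple
        (fun S => ∀ φs : Fin k → EState PVar PVal LVar LVal,
          (∀ i, φs i ∈ S ∧ (φs i).1 t = num i) → φs ∈ P)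
        C
        (fun S => ∀ φs : Fin k → EState PVar PVal LVar LVal,
          (∀ i, φs i ∈ S ∧ (φs i).1 t = num i) → φs ∈ Q) := by
  constructor
  · intro h S hS φs hφ
    choose σ hσ hstep using fun i => (hφ i).1
    refine h (fun i => ((φs i).1, σ i)) (hS _ fun i => ⟨hσ i, (hφ i).2⟩) φs ?_
    exact fun i => ⟨hstep i, rfl⟩
  · intro h φs hP φs' hk
    rw [hQt φs' num]
    refine h (Set.range fun i => (Function.update (φs i).1 t (num i), (φs i).2)) ?_ _ ?_
    · intro ψ hψ
      have e : ψ = fun i => (Function.update (φs i).1 t (num i), (φs i).2) := by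
        funext i
        obtain ⟨⟨j, hj⟩, h2⟩ := hψ i
        have hij : j = i := by
          apply hnum
          rw [← h2, ← hj]
          simp
        subst hij
        exact hj.symm
      rw [e]
      exact (hPt φs num).1 hP
    · intro i
      refine ⟨⟨(φs i).2, ⟨i, ?_⟩, (hk i).1⟩, by simp⟩
      simp [(hk i).2]
end

section
/- Expressing k-Incorrectness Logic in Hyper Hoare Logic: let k ≥ 1, let t and u be distinct logical variables, assume LVals contains k distinct values denoted 1, …, k and that there is an injection from the set of k-tuples of program states into LVals. Let P and Q be sets of k-tuples of extended states that are insensitive to t and to u, and assume P depends only on program variables. Define P'(S) := for every φ⃗ ∈ P, if φ_i^L(t) = i for every i ∈ {1,…,k}, then there exists v ∈ LVals such that for every i, the state obtained from φ_i by updating its logical state at u to v belongs to S; and define Q'(S) analogously with Q. Then for every command C, ⊨_{k-IL} {P} C {Q} holds if and only if the hyper-triple ⊨ {P'} C {Q'} holds. -/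
/-- A set of k-tuples of extended states depends only on program variables iff
membership is unchanged when the logical states of its components are replaced
arbitrarily. -/
def DependsOnlyOnPVars {PVar PVal LVar LVal : Type} {k : ℕ}
    (T : Set (Fin k → EState PVar PVal LVar LVal)) : Prop :=
  ∀ (φs : Fin k → EState PVar PVal LVar LVal) (L : Fin k → (LVar → LVal)),
    φs ∈ T ↔ (fun i => (L i, (φs i).2)) ∈ T

/-- k-Incorrectness Logic triples over sets of k-tuples of extended states. -/
def KILTriple {PVar PVal LVar LVal : Type} [DecidableEq PVar] {k : ℕ}
    (P : Set (Fin k → EState PVar PVal LVar LVal)) (C : Cmd PVar PVal)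
    (Q : Set (Fin k → EState PVar PVal LVar LVal)) : Prop :=
  ∀ φs' ∈ Q, ∃ φs ∈ P, KStep C φs φs'

/-- Expressing k-Incorrectness Logic in Hyper Hoare Logic. -/
theorem expressing_kIL_in_HHL {PVar PVal LVar LVal : Type}
    [DecidableEq PVar] [DecidableEq LVar]
    (k : ℕ) (hk : 1 ≤ k) (t u : LVar) (htu : t ≠ u)
    (num : Fin k → LVal) (hnum : Function.Injective num)
    (emb : (Fin k → (PVar → PVal)) → LVal) (hemb : Function.Injective emb)
    (P Q : Set (Fin k → EState PVar PVal LVar LVal))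
    (hPt : Insensitive t P) (hPu : Insensitive u P)
    (hQt : Insensitive t Q) (hQu : Insensitive u Q)
    (hPprog : DependsOnlyOnPVars P)
    (C : Cmd PVar PVal) :
    KILTriple P C Q ↔
      HyperTriple
        (fun S => ∀ φs ∈ P, (∀ i : Fin k, (φs i).1 t = num i) →
          ∃ v : LVal, ∀ i : Fin k, (Function.update (φs i).1 u v, (φs i).2) ∈ S)
        C
        (fun S => ∀ φs' ∈ Q, (∀ i : Fin k, (φs' i).1 t = num i) →
          ∃ v : LVal, ∀ i : Fin k, (Function.update (φs' i).1 u v, (φs' i).2) ∈ S) := by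
  constructor
  · intro h S hS φs' hφ' ht
    obtain ⟨φs, hφ, hstep⟩ := h φs' hφ'
    obtain ⟨v, hv⟩ := hS φs hφ (fun i => by rw [(hstep i).2]; exact ht i)
    refine ⟨v, fun i => ⟨(φs i).2, ?_, (hstep i).1⟩⟩
    have := hv i
    rw [(hstep i).2] at this
    exact this
  · intro h φs' hφ'
    have key := h {e | ∃ φ ∈ P, ∃ j : Fin k, e.1 t = num j ∧
        e.1 u = emb (fun j => (φ j).2) ∧ e.2 = (φ j).2} (by
      intro φs hφ ht
      refine ⟨emb (fun j => (φs j).2), fun i => ⟨φs, hφ, i, ?_, ?_, rfl⟩⟩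
      · simp [Function.update_of_ne htu, ht i]
      · simp)
    obtain ⟨v, hv⟩ := key (fun i => (Function.update (φs' i).1 t (num i), (φs' i).2))
      ((hQt φs' num).1 hφ') (fun i => by simp)
    have hv2 : ∀ i, ∃ φ ∈ P, v = emb (fun j => (φ j).2) ∧
        BigStep C (φ i).2 (φs' i).2 := by
      intro i
      obtain ⟨σ, ⟨φ, hφ, j, h1, h2, h3⟩, hs⟩ := hv i
      simp [Function.update_of_ne htu] at h1 h2 h3 hs
      have hij := hnum h1
      subst hij
      subst h3
      exact ⟨φ, hφ, h2, hs⟩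
    obtain ⟨φ, hφ, hv0, -⟩ := hv2 ⟨0, hk⟩
    refine ⟨fun i => ((φs' i).1, (φ i).2), (hPprog φ (fun i => (φs' i).1)).1 hφ, fun i => ⟨?_, rfl⟩⟩
    obtain ⟨ψ, -, hv1, hs⟩ := hv2 i
    have he := congrFun (hemb (hv0.symm.trans hv1)) i
    simp only [he]
    exact hs
end

section
/- Expressing Forward Underapproximation in Hyper Hoare Logic: for all sets P, Q of extended states and every command C, the Forward Underapproximation triple ⊨_FU {P} C {Q} holds if and only if the hyper-triple ⊨ {λS. P ∩ S ≠ ∅} C {λS. Q ∩ S ≠ ∅} holds. -/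
/-- Forward Underapproximation triples over sets of extended states. -/
def FUTriple {PVar PVal LVar LVal : Type} [DecidableEq PVar]
    (P : Set (EState PVar PVal LVar LVal)) (C : Cmd PVar PVal)
    (Q : Set (EState PVar PVal LVar LVal)) : Prop :=
  ∀ φ ∈ P, ∃ σ' : PVar → PVal, BigStep C φ.2 σ' ∧ (φ.1, σ') ∈ Q

/-- Expressing Forward Underapproximation in Hyper Hoare Logic. -/
theorem expressing_FU_in_HHL {PVar PVal LVar LVal : Type} [DecidableEq PVar]
    (P Q : Set (EState PVar PVal LVar LVal)) (C : Cmd PVar PVal) :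
    FUTriple P C Q ↔ HyperTriple (fun S => P ∩ S ≠ ∅) C (fun S => Q ∩ S ≠ ∅) := by
  simp only [FUTriple, HyperTriple, ← Set.nonempty_iff_ne_empty]
  constructor
  · rintro h S ⟨φ, hP, hS⟩
    obtain ⟨σ', hb, hq⟩ := h φ hP
    exact ⟨(φ.1, σ'), hq, φ.2, hS, hb⟩
  · intro h φ hP
    obtain ⟨ψ, hQ, σ, hσ, hb⟩ := h {φ} ⟨φ, hP, rfl⟩
    have e : (ψ.1, σ) = φ := hσ
    subst e
    exact ⟨ψ.2, hb, hQ⟩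
end

section
/- Expressing k-Forward Underapproximation in Hyper Hoare Logic: let k ≥ 1, let t ∈ LVars, assume LVals contains k distinct values denoted 1, …, k, and let P and Q be sets of k-tuples of extended states that are insensitive to t. Define P'(S) := there exists φ⃗ ∈ P such that for every i ∈ {1,…,k}, φ_i ∈ S and φ_i^L(t) = i; and define Q'(S) analogously with Q. Then for every command C, ⊨_{k-FU} {P} C {Q} holds if and only if the hyper-triple ⊨ {P'} C {Q'} holds. -/
/-- k-Forward Underapproximation triples over sets of k-tuples of extended states. -/
def KFUTriple {PVar PVal LVar LVal : Type} [DecidableEq PVar] {k : ℕ}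
    (P : Set (Fin k → EState PVar PVal LVar LVal)) (C : Cmd PVar PVal)
    (Q : Set (Fin k → EState PVar PVal LVar LVal)) : Prop :=
  ∀ φs ∈ P, ∃ φs' ∈ Q, KStep C φs φs'

/-- Expressing k-Forward Underapproximation in Hyper Hoare Logic. -/
theorem expressing_kFU_in_HHL {PVar PVal LVar LVal : Type}
    [DecidableEq PVar] [DecidableEq LVar]
    (k : ℕ) (hk : 1 ≤ k) (t : LVar)
    (num : Fin k → LVal) (hnum : Function.Injective num)
    (P Q : Set (Fin k → EState PVar PVal LVar LVal))
    (hPt : Insensitive t P) (hQt : Insensitive t Q)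
    (C : Cmd PVar PVal) :
    KFUTriple P C Q ↔
      HyperTriple
        (fun S => ∃ φs ∈ P, ∀ i : Fin k, φs i ∈ S ∧ (φs i).1 t = num i)
        C
        (fun S => ∃ φs' ∈ Q, ∀ i : Fin k, φs' i ∈ S ∧ (φs' i).1 t = num i) := by
  constructor
  · rintro h S ⟨φs, hP, hS⟩
    obtain ⟨φs', hQ, hstep⟩ := h φs hP
    refine ⟨φs', hQ, fun i => ⟨⟨(φs i).2, ?_, (hstep i).1⟩, ?_⟩⟩
    · rw [← (hstep i).2]
      exact (hS i).1
    · rw [← (hstep i).2]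
      exact (hS i).2
  · intro h φs hP
    obtain ⟨φs', hQ, hs⟩ := h
      (Set.range fun i => (Function.update (φs i).1 t (num i), (φs i).2))
      ⟨_, (hPt φs num).1 hP, fun i => ⟨⟨i, rfl⟩, by simp⟩⟩
    refine ⟨_, (hQt φs' (fun i => (φs i).1 t)).1 hQ, fun i => ?_⟩
    obtain ⟨⟨σ, ⟨j, hj⟩, hstep⟩, ht⟩ := hs i
    have h1 : Function.update (φs j).1 t (num j) = (φs' i).1 := congrArg Prod.fst hj
    have h2 : (φs j).2 = σ := congrArg Prod.snd hj
    have hij : j = i := by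
      apply hnum
      rw [← ht, ← h1]
      simp
    subst hij
    subst h2
    refine ⟨hstep, ?_⟩
    change (φs j).1 = Function.update (φs' j).1 t ((φs j).1 t)
    rw [← h1]
    simp
end

section
/- Expressing k-Universal Existential triples (RHLE-style) in Hyper Hoare Logic: let k1, k2 ≥ 1, let t and u be distinct logical variables, assume LVals contains distinct values denoted 1, 2, …, max(k1,k2), and let P and Q be sets of (k1+k2)-tuples of extended states that are insensitive to t and to u. For n ∈ {1,2} and a set S of extended states, say T_n(φ⃗, S) holds iff for every i ∈ {1,…,k_n}, φ_i ∈ S, φ_i^L(t) = i and φ_i^L(u) = n. Define P'(S) := (for every i ∈ {1,…,k2} there exists φ ∈ S with φ^L(t) = i and φ^L(u) = 2) and (for all tuples φ⃗ of length k1 and γ⃗ of length k2, if T_1(φ⃗, S) and T_2(γ⃗, S) then (φ⃗, γ⃗) ∈ P); define Q'(S) := for every tuple φ⃗' of length k1 with T_1(φ⃗', S), there exists a tuple γ⃗' of length k2 with T_2(γ⃗', S) and (φ⃗', γ⃗') ∈ Q. Then for every command C, ⊨_{UE(k1,k2)} {P} C {Q} holds if and only if the hyper-triple ⊨ {P'}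 C {Q'} holds. -/
/-- Insensitivity to a logical variable for a set of pairs of a k1-tuple and a
k2-tuple of extended states. -/
def InsensPair {PVar PVal LVar LVal : Type} [DecidableEq LVar] {k1 k2 : ℕ} (t : LVar)
    (T : Set ((Fin k1 → EState PVar PVal LVar LVal) × (Fin k2 → EState PVar PVal LVar LVal))) :
    Prop :=
  ∀ (p : (Fin k1 → EState PVar PVal LVar LVal) × (Fin k2 → EState PVar PVal LVar LVal))
    (g1 : Fin k1 → LVal) (g2 : Fin k2 → LVal),
    p ∈ T ↔
      ((fun i => (Function.update (p.1 i).1 t (g1 i), (p.1 i).2)),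
       (fun i => (Function.update (p.2 i).1 t (g2 i), (p.2 i).2))) ∈ T

/-- k-Universal Existential (RHLE-style) triples. -/
def UETriple {PVar PVal LVar LVal : Type} [DecidableEq PVar] {k1 k2 : ℕ}
    (P : Set ((Fin k1 → EState PVar PVal LVar LVal) × (Fin k2 → EState PVar PVal LVar LVal)))
    (C : Cmd PVar PVal)
    (Q : Set ((Fin k1 → EState PVar PVal LVar LVal) × (Fin k2 → EState PVar PVal LVar LVal))) :
    Prop :=
  ∀ p ∈ P, ∀ φs' : Fin k1 → EState PVar PVal LVar LVal, KStep C p.1 φs' →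
    ∃ γs' : Fin k2 → EState PVar PVal LVar LVal, KStep C p.2 γs' ∧ (φs', γs') ∈ Q

/-- Tagging a state. -/
def tagSt {PVar PVal LVar LVal : Type} [DecidableEq LVar] (t u : LVar) (a b : LVal)
    (φ : EState PVar PVal LVar LVal) : EState PVar PVal LVar LVal :=
  (Function.update (Function.update φ.1 t a) u b, φ.2)

theorem tagSt_t {PVar PVal LVar LVal : Type} [DecidableEq LVar] {t u : LVar} (htu : t ≠ u)
    (a b : LVal) (φ : EState PVar PVal LVar LVal) : (tagSt t u a b φ).1 t = a := by
  simp [tagSt, htu]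

theorem tagSt_u {PVar PVal LVar LVal : Type} [DecidableEq LVar] {t u : LVar}
    (a b : LVal) (φ : EState PVar PVal LVar LVal) : (tagSt t u a b φ).1 u = b := by
  simp [tagSt]

theorem tag_mem {PVar PVal LVar LVal : Type} [DecidableEq LVar] {k1 k2 : ℕ} {t u : LVar}
    {T : Set ((Fin k1 → EState PVar PVal LVar LVal) × (Fin k2 → EState PVar PVal LVar LVal))}
    (ht : InsensPair t T) (hu : InsensPair u T)
    (p : (Fin k1 → EState PVar PVal LVar LVal) × (Fin k2 → EState PVar PVal LVar LVal))
    (a1 b1 : Fin k1 → LVal) (a2 b2 : Fin k2 → LVal) :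
    p ∈ T ↔ ((fun i => tagSt t u (a1 i) (b1 i) (p.1 i)),
      (fun i => tagSt t u (a2 i) (b2 i) (p.2 i))) ∈ T :=
  (ht p a1 a2).trans (hu _ b1 b2)

/-- Expressing k-Universal Existential triples in Hyper Hoare Logic. -/
theorem expressing_kUE_in_HHL {PVar PVal LVar LVal : Type}
    [DecidableEq PVar] [DecidableEq LVar]
    (k1 k2 : ℕ) (hk1 : 1 ≤ k1) (hk2 : 1 ≤ k2)
    (t u : LVar) (htu : t ≠ u)
    (num : ℕ → LVal)
    (hnum : ∀ i j : ℕ, 1 ≤ i → i ≤ max (max k1 k2) 2 → 1 ≤ j → j ≤ max (max k1 k2) 2 →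
      num i = num j → i = j)
    (P Q : Set ((Fin k1 → EState PVar PVal LVar LVal) × (Fin k2 → EState PVar PVal LVar LVal)))
    (hPt : InsensPair t P) (hPu : InsensPair u P)
    (hQt : InsensPair t Q) (hQu : InsensPair u Q)
    (C : Cmd PVar PVal) :
    UETriple P C Q ↔
      HyperTriple
        (fun S =>
          (∀ i : Fin k2, ∃ φ ∈ S, φ.1 t = num (i.1 + 1) ∧ φ.1 u = num 2) ∧
          (∀ (φs : Fin k1 → EState PVar PVal LVar LVal)
             (γs : Fin k2 → EState PVar PVal LVar LVal),
            (∀ i : Fin k1, φs i ∈ S ∧ (φs i).1 t = num (i.1 + 1) ∧ (φs i).1 u = num 1) →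
            (∀ i : Fin k2, γs i ∈ S ∧ (γs i).1 t = num (i.1 + 1) ∧ (γs i).1 u = num 2) →
            (φs, γs) ∈ P))
        C
        (fun S =>
          ∀ φs' : Fin k1 → EState PVar PVal LVar LVal,
            (∀ i : Fin k1, φs' i ∈ S ∧ (φs' i).1 t = num (i.1 + 1) ∧ (φs' i).1 u = num 1) →
            ∃ γs' : Fin k2 → EState PVar PVal LVar LVal,
              (∀ i : Fin k2, γs' i ∈ S ∧ (γs' i).1 t = num (i.1 + 1) ∧ (γs' i).1 u = num 2) ∧
              (φs', γs') ∈ Q) := by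
  constructor
  · rintro h S ⟨h1, h2⟩ φs' hφ
    choose γs hγS hγ using h1
    choose σ hσ hstep using fun i => (hφ i).1
    obtain ⟨γs', hk, hQ⟩ := h (fun i => ((φs' i).1, σ i), γs)
      (h2 _ _ (fun i => ⟨hσ i, (hφ i).2⟩) (fun i => ⟨hγS i, hγ i⟩)) φs'
      (fun i => ⟨hstep i, rfl⟩)
    refine ⟨γs', fun i => ?_, hQ⟩
    obtain ⟨hb, he⟩ := hk i
    dsimp only at hb he
    refine ⟨⟨(γs i).2, ?_, hb⟩, ?_⟩
    · rw [← he]; exact hγS i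
    · rw [← he]; exact hγ i
  · rintro h ⟨p1, p2⟩ hp φs' hk
    let A : Fin k1 → EState PVar PVal LVar LVal :=
      fun i => tagSt t u (num (i.1 + 1)) (num 1) (p1 i)
    let B : Fin k2 → EState PVar PVal LVar LVal :=
      fun i => tagSt t u (num (i.1 + 1)) (num 2) (p2 i)
    have hAt : ∀ i, (A i).1 t = num (i.1 + 1) := fun i => tagSt_t htu _ _ _
    have hAu : ∀ i, (A i).1 u = num 1 := fun i => tagSt_u _ _ _
    have hBt : ∀ i, (B i).1 t = num (i.1 + 1) := fun i => tagSt_t htu _ _ _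
    have hBu : ∀ i, (B i).1 u = num 2 := fun i => tagSt_u _ _ _
    have h12 : num 1 ≠ num 2 := fun e => by
      have := hnum 1 2 (by omega) (by omega) (by omega) (by omega) e
      omega
    have uA : ∀ (i : Fin k1) (φ : EState PVar PVal LVar LVal), φ ∈ Set.range A ∪ Set.range B →
        φ.1 t = num (i.1 + 1) → φ.1 u = num 1 → φ = A i := by
      rintro i φ (⟨j, rfl⟩ | ⟨j, rfl⟩) h1 h2
      · rw [hAt] at h1
        have := hnum _ _ (by omega) (by omega) (by omega) (by omega) h1
        congr 1
        exact Fin.ext (by omega)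
      · rw [hBu] at h2
        exact absurd h2.symm h12
    have uB : ∀ (i : Fin k2) (φ : EState PVar PVal LVar LVal), φ ∈ Set.range A ∪ Set.range B →
        φ.1 t = num (i.1 + 1) → φ.1 u = num 2 → φ = B i := by
      rintro i φ (⟨j, rfl⟩ | ⟨j, rfl⟩) h1 h2
      · rw [hAu] at h2
        exact absurd h2 h12
      · rw [hBt] at h1
        have := hnum _ _ (by omega) (by omega) (by omega) (by omega) h1
        congr 1
        exact Fin.ext (by omega)
    obtain ⟨γs', hγ, hQ⟩ := h (Set.range A ∪ Set.range B)
      ⟨fun i => ⟨B i, Or.inr ⟨i, rfl⟩, hBt i, hBu i⟩, by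
        intro φs γs h1 h2
        have e1 : φs = A := funext fun i => uA i _ (h1 i).1 (h1 i).2.1 (h1 i).2.2
        have e2 : γs = B := funext fun i => uB i _ (h2 i).1 (h2 i).2.1 (h2 i).2.2
        rw [e1, e2]
        exact (tag_mem hPt hPu (p1, p2) _ _ _ _).1 hp⟩
      (fun i => tagSt t u (num (i.1 + 1)) (num 1) (φs' i))
      (fun i => ⟨⟨(p1 i).2, Or.inl ⟨i, by
          have e : (p1 i).1 = (φs' i).1 := (hk i).2
          simp only [A, tagSt, e]⟩, (hk i).1⟩, tagSt_t htu _ _ _, tagSt_u _ _ _⟩)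
    have key : ∀ i, (γs' i).1 = (B i).1 ∧ BigStep C (p2 i).2 (γs' i).2 := by
      intro i
      obtain ⟨⟨σ, hσ, hb⟩, h1, h2⟩ := hγ i
      have e := uB i _ hσ h1 h2
      have e1 : (γs' i).1 = (B i).1 := (Prod.ext_iff.1 e).1
      have e2 : σ = (p2 i).2 := (Prod.ext_iff.1 e).2
      exact ⟨e1, e2 ▸ hb⟩
    refine ⟨fun i => ((p2 i).1, (γs' i).2), fun i => ⟨(key i).2, rfl⟩, ?_⟩
    refine (tag_mem hQt hQu _ (fun i => num (i.1 + 1)) (fun _ => num 1)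
      (fun i => num (i.1 + 1)) (fun _ => num 2)).2 ?_
    have e : γs' = fun i => tagSt t u (num (i.1 + 1)) (num 2) ((p2 i).1, (γs' i).2) :=
      funext fun i => Prod.ext (key i).1 rfl
    rw [e] at hQ
    exact hQ
end

section
/- Soundness of the syntactic havoc rule (HavocS): for every program variable x and every closed syntactic hyper-assertion A, the hyper-triple ⊨ {H^x(A)} (havoc x) {A} is valid, where H^x is defined recursively on syntactic hyper-assertions by H^x(∀⟨φ⟩. A) := ∀⟨φ⟩. ∀v. H^x(A[v / φ^P(x)]) and H^x(∃⟨φ⟩. A) := ∃⟨φ⟩. ∃v. H^x(A[v / φ^P(x)]) with v a fresh value variable (A[v / φ^P(x)] being the substitution of the lookup φ^P(x) by v), and H^x acting homomorphically on all other constructors; each syntactic hyper-assertion is interpreted as the hyper-assertion λS. (S satisfies it). -/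
/-- Syntactic program expressions (constants, program-variable lookups, binary
operations, unary function applications). Program and logical values are drawn
from a single type `Val`. -/
inductive PExp (PVar Val : Type) : Type where
  | const : Val → PExp PVar Val
  | var : PVar → PExp PVar Val
  | binop : (Val → Val → Val) → PExp PVar Val → PExp PVar Val → PExp PVar Val
  | fn : (Val → Val) → PExp PVar Val → PExp PVar Val

/-- Semantic interpretation ⟦e⟧ of a syntactic program expression. -/
def PExp.eval {PVar Val : Type} (σ : PVar → Val) : PExp PVar Val → Val
  | .const v => v
  | .var x => σ x
  | .binop op e1 e2 => op (PExp.eval σ e1) (PExp.eval σ e2)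
  | .fn f e => f (PExp.eval σ e)

/-- Syntactic hyper-expressions: constants, program-variable lookups φ^P(x) and
logical-variable lookups φ^L(x) (state variables are names in ℕ), binary operations
and unary function applications. Bound values are represented as constants. -/
inductive HExp (PVar LVar Val : Type) : Type where
  | const : Val → HExp PVar LVar Val
  | pvar : ℕ → PVar → HExp PVar LVar Val
  | lvar : ℕ → LVar → HExp PVar LVar Val
  | binop : (Val → Val → Val) → HExp PVar LVar Val → HExp PVar LVar Val → HExp PVar LVar Val
  | fn : (Val → Val) → HExp PVar LVar Val → HExp PVar LVar Val

/-- Evaluation of a hyper-expression under an environment for state variables. -/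
def HExp.eval {PVar LVar Val : Type} (env : ℕ → EState PVar Val LVar Val) :
    HExp PVar LVar Val → Val
  | .const v => v
  | .pvar n x => (env n).2 x
  | .lvar n x => (env n).1 x
  | .binop op e1 e2 => op (HExp.eval env e1) (HExp.eval env e2)
  | .fn f e => f (HExp.eval env e)

/-- Syntactic hyper-assertions: Boolean constants, comparisons of hyper-expressions,
conjunction, disjunction, value quantifiers (binding represented by Lean functions)
and state quantifiers (binding state-variable names in ℕ). -/
inductive HAssrt (PVar LVar Val : Type) : Type where
  | bconst : Prop → HAssrt PVar LVar Val
  | comp : (Val → Val → Prop) → HExp PVar LVar Val → HExp PVar LVar Val → HAssrt PVar LVar Val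
  | conj : HAssrt PVar LVar Val → HAssrt PVar LVar Val → HAssrt PVar LVar Val
  | disj : HAssrt PVar LVar Val → HAssrt PVar LVar Val → HAssrt PVar LVar Val
  | forallV : (Val → HAssrt PVar LVar Val) → HAssrt PVar LVar Val
  | existsV : (Val → HAssrt PVar LVar Val) → HAssrt PVar LVar Val
  | forallS : ℕ → HAssrt PVar LVar Val → HAssrt PVar LVar Val
  | existsS : ℕ → HAssrt PVar LVar Val → HAssrt PVar LVar Val

/-- Satisfaction of a syntactic hyper-assertion by a set S of extended states,
relative to an environment for state variables. State quantifiers range over S. -/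
def HAssrt.sat {PVar LVar Val : Type} (S : Set (EState PVar Val LVar Val))
    (env : ℕ → EState PVar Val LVar Val) : HAssrt PVar LVar Val → Prop
  | .bconst b => b
  | .comp r e1 e2 => r (HExp.eval env e1) (HExp.eval env e2)
  | .conj A B => HAssrt.sat S env A ∧ HAssrt.sat S env B
  | .disj A B => HAssrt.sat S env A ∨ HAssrt.sat S env B
  | .forallV body => ∀ v : Val, HAssrt.sat S env (body v)
  | .existsV body => ∃ v : Val, HAssrt.sat S env (body v)
  | .forallS n A => ∀ α ∈ S, HAssrt.sat S (Function.update env n α) A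
  | .existsS n A => ∃ α ∈ S, HAssrt.sat S (Function.update env n α) A

/-- Free state variables of a hyper-expression. -/
def HExp.fsv {PVar LVar Val : Type} : HExp PVar LVar Val → Set ℕ
  | .const _ => ∅
  | .pvar n _ => {n}
  | .lvar n _ => {n}
  | .binop _ e1 e2 => HExp.fsv e1 ∪ HExp.fsv e2
  | .fn _ e => HExp.fsv e

/-- Free state variables of a syntactic hyper-assertion. -/
def HAssrt.fsv {PVar LVar Val : Type} : HAssrt PVar LVar Val → Set ℕ
  | .bconst _ => ∅
  | .comp _ e1 e2 => HExp.fsv e1 ∪ HExp.fsv e2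
  | .conj A B => HAssrt.fsv A ∪ HAssrt.fsv B
  | .disj A B => HAssrt.fsv A ∪ HAssrt.fsv B
  | .forallV body => ⋃ v, HAssrt.fsv (body v)
  | .existsV body => ⋃ v, HAssrt.fsv (body v)
  | .forallS n A => HAssrt.fsv A \ {n}
  | .existsS n A => HAssrt.fsv A \ {n}

/-- A syntactic hyper-assertion is closed iff it has no free state variables. -/
def HAssrt.Closed {PVar LVar Val : Type} (A : HAssrt PVar LVar Val) : Prop :=
  HAssrt.fsv A = ∅

/-- Substitution, in a hyper-expression, of the lookup φ^P(x) of the state variable n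
by the value v (as a constant). -/
def HExp.substPC {PVar LVar Val : Type} [DecidableEq PVar]
    (n : ℕ) (x : PVar) (v : Val) : HExp PVar LVar Val → HExp PVar LVar Val
  | .const c => .const c
  | .pvar m x' => if m = n ∧ x' = x then .const v else .pvar m x'
  | .lvar m y => .lvar m y
  | .binop op e1 e2 => .binop op (HExp.substPC n x v e1) (HExp.substPC n x v e2)
  | .fn f e => .fn f (HExp.substPC n x v e)

/-- Capture-avoiding substitution A[v / φ^P(x)] in a hyper-assertion: lookups of the
state variable n at the program variable x are replaced by the constant v, stopping
at rebinding of the state-variable name n. -/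
def HAssrt.substPC {PVar LVar Val : Type} [DecidableEq PVar]
    (n : ℕ) (x : PVar) (v : Val) : HAssrt PVar LVar Val → HAssrt PVar LVar Val
  | .bconst b => .bconst b
  | .comp r e1 e2 => .comp r (HExp.substPC n x v e1) (HExp.substPC n x v e2)
  | .conj A B => .conj (HAssrt.substPC n x v A) (HAssrt.substPC n x v B)
  | .disj A B => .disj (HAssrt.substPC n x v A) (HAssrt.substPC n x v B)
  | .forallV body => .forallV (fun w => HAssrt.substPC n x v (body w))
  | .existsV body => .existsV (fun w => HAssrt.substPC n x v (body w))
  | .forallS m A => if m = n then .forallS m A else .forallS m (HAssrt.substPC n x v A)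
  | .existsS m A => if m = n then .existsS m A else .existsS m (HAssrt.substPC n x v A)

/-- The syntactic transformation H^x for havoc:
H^x(∀⟨φ⟩. A) = ∀⟨φ⟩. ∀v. H^x(A)[v / φ^P(x)] and
H^x(∃⟨φ⟩. A) = ∃⟨φ⟩. ∃v. H^x(A)[v / φ^P(x)], acting homomorphically on all other
constructors (for closed assertions this coincides with the substitute-then-recurse
formulation, the fresh quantified value variable being the HOAS-bound v). -/
def HAssrt.havocT {PVar LVar Val : Type} [DecidableEq PVar] (x : PVar) :
    HAssrt PVar LVar Val → HAssrt PVar LVar Val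
  | .bconst b => .bconst b
  | .comp r e1 e2 => .comp r e1 e2
  | .conj A B => .conj (HAssrt.havocT x A) (HAssrt.havocT x B)
  | .disj A B => .disj (HAssrt.havocT x A) (HAssrt.havocT x B)
  | .forallV body => .forallV (fun v => HAssrt.havocT x (body v))
  | .existsV body => .existsV (fun v => HAssrt.havocT x (body v))
  | .forallS n A => .forallS n (.forallV (fun v => HAssrt.substPC n x v (HAssrt.havocT x A)))
  | .existsS n A => .existsS n (.existsV (fun v => HAssrt.substPC n x v (HAssrt.havocT x A)))

theorem HExp.eval_substPC_aux {PVar LVar Val : Type} [DecidableEq PVar]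
    (n : ℕ) (x : PVar) (v : Val) (env : ℕ → EState PVar Val LVar Val)
    (e : HExp PVar LVar Val) :
    HExp.eval env (HExp.substPC n x v e) =
      HExp.eval (Function.update env n ((env n).1, Function.update (env n).2 x v)) e := by
  induction e with
  | const c => rfl
  | pvar m y =>
    simp only [HExp.substPC]
    by_cases hm : m = n
    · subst hm
      by_cases hy : y = x
      · subst hy; simp [HExp.eval]
      · simp [HExp.eval, hy]
    · simp [HExp.eval, hm]
  | lvar m y =>
    by_cases hm : m = n
    · subst hm; simp [HExp.eval, HExp.substPC]
    · simp [HExp.eval, HExp.substPC, hm]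
  | binop op e1 e2 h1 h2 => simp only [HExp.eval, HExp.substPC, h1, h2]
  | fn f e h => simp only [HExp.eval, HExp.substPC, h]

theorem HAssrt.sat_substPC_aux {PVar LVar Val : Type} [DecidableEq PVar]
    (n : ℕ) (x : PVar) (v : Val) (S : Set (EState PVar Val LVar Val))
    (A : HAssrt PVar LVar Val) : ∀ env : ℕ → EState PVar Val LVar Val,
    (HAssrt.sat S env (HAssrt.substPC n x v A) ↔
      HAssrt.sat S (Function.update env n ((env n).1, Function.update (env n).2 x v)) A) := by
  induction A with
  | bconst b => intro env; rfl
  | comp r e1 e2 => intro env; simp only [HAssrt.sat, HAssrt.substPC, HExp.eval_substPC_aux]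
  | conj A B hA hB => intro env; simp only [HAssrt.sat, HAssrt.substPC, hA, hB]
  | disj A B hA hB => intro env; simp only [HAssrt.sat, HAssrt.substPC, hA, hB]
  | forallV b h => intro env; simp only [HAssrt.sat, HAssrt.substPC, h]
  | existsV b h => intro env; simp only [HAssrt.sat, HAssrt.substPC, h]
  | forallS m A h =>
    intro env
    by_cases hm : m = n
    · subst hm; simp [HAssrt.sat, HAssrt.substPC]
    · have hm' : n ≠ m := fun h => hm h.symm
      simp only [HAssrt.sat, HAssrt.substPC, hm, if_false, h, Function.update_of_ne hm',
        Function.update_comm hm]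
  | existsS m A h =>
    intro env
    by_cases hm : m = n
    · subst hm; simp [HAssrt.sat, HAssrt.substPC]
    · have hm' : n ≠ m := fun h => hm h.symm
      simp only [HAssrt.sat, HAssrt.substPC, hm, if_false, h, Function.update_of_ne hm',
        Function.update_comm hm]

theorem HAssrt.havocT_aux {PVar LVar Val : Type} [DecidableEq PVar]
    (x : PVar) (S : Set (EState PVar Val LVar Val))
    (A : HAssrt PVar LVar Val) : ∀ env : ℕ → EState PVar Val LVar Val,
    HAssrt.sat S env (HAssrt.havocT x A) → HAssrt.sat (sem (Cmd.havoc x) S) env A := by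
  induction A with
  | bconst b => intro env h; exact h
  | comp r e1 e2 => intro env h; exact h
  | conj A B hA hB => intro env h; exact ⟨hA env h.1, hB env h.2⟩
  | disj A B hA hB => intro env h; exact h.imp (hA env) (hB env)
  | forallV b ih => intro env h v; exact ih v env (h v)
  | existsV b ih => intro env h; obtain ⟨v, hv⟩ := h; exact ⟨v, ih v env hv⟩
  | forallS n A ih =>
    rintro env h ⟨l, p⟩ ⟨σ, hσ, hstep⟩
    cases hstep with
    | havoc _ _ v =>
      have h2 := (HAssrt.sat_substPC_aux n x v S _ _).1 (h (l, σ) hσ v)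
      simp only [Function.update_self, Function.update_idem] at h2
      exact ih _ h2
  | existsS n A ih =>
    rintro env ⟨⟨l, σ⟩, hσ, v, h⟩
    have h2 := (HAssrt.sat_substPC_aux n x v S _ _).1 h
    simp only [Function.update_self, Function.update_idem] at h2
    exact ⟨(l, Function.update σ x v), ⟨σ, hσ, BigStep.havoc x σ v⟩, ih _ h2⟩

/-- Soundness of the syntactic havoc rule (HavocS): ⊨ {H^x(A)} (havoc x) {A} for
closed A. -/
theorem havocS_sound {PVar LVar Val : Type} [DecidableEq PVar]
    (x : PVar) (A : HAssrt PVar LVar Val) (hclosed : A.Closed) :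
    ∀ env : ℕ → EState PVar Val LVar Val,
      HyperTriple
        (fun S => HAssrt.sat S env (HAssrt.havocT x A))
        (Cmd.havoc x)
        (fun S => HAssrt.sat S env A) := by
  intro env S h
  exact HAssrt.havocT_aux x S A env h
end

section
/- Soundness of the synchronized while rule (WhileSync): let b be a predicate on program states, C a command, and I a hyper-assertion. Define while(b){C} := ((assume b) ; C)* ; assume(λσ. ¬ b(σ)). If (i) for every set S of extended states, I(S) implies that b(φ^P) = b(φ'^P) for all φ, φ' ∈ S, and (ii) the hyper-triple ⊨ {λS. I(S) ∧ ∀φ ∈ S, b(φ^P)} C {I} is valid, then the hyper-triple ⊨ {I} while(b){C} {λS. (I(S) ∨ S = ∅) ∧ ∀φ ∈ S, ¬ b(φ^P)} is valid. -/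
/-- if(b){C} := ((assume b) ; C) + (assume ¬b). -/
def ifCmd {PVar PVal : Type} (b : (PVar → PVal) → Prop) (C : Cmd PVar PVal) :
    Cmd PVar PVal :=
  Cmd.choice (Cmd.seq (Cmd.assume b) C) (Cmd.assume (fun σ => ¬ b σ))

/-- while(b){C} := ((assume b) ; C)* ; assume ¬b. -/
def whileCmd {PVar PVal : Type} (b : (PVar → PVal) → Prop) (C : Cmd PVar PVal) :
    Cmd PVar PVal :=
  Cmd.seq (Cmd.iter (Cmd.seq (Cmd.assume b) C)) (Cmd.assume (fun σ => ¬ b σ))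

theorem sem_while_false {PVar PVal LVar LVal : Type} [DecidableEq PVar]
    (b : (PVar → PVal) → Prop) (C : Cmd PVar PVal)
    (S : Set (EState PVar PVal LVar LVal)) (h : ∀ φ ∈ S, ¬ b φ.2) :
    sem (whileCmd b C) S = S := by
  ext ⟨l, τ⟩
  constructor
  · rintro ⟨σ, hσ, hs⟩
    cases hs with
    | seq h1 h2 =>
      cases h2
      cases h1 with
      | iterNil => exact hσ
      | iterCons h3 h4 =>
        cases h3 with
        | seq h5 h6 =>
          cases h5 with
          | assume hb => exact absurd hb (h _ hσ)
  · intro hm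
    exact ⟨τ, hm, BigStep.seq BigStep.iterNil (BigStep.assume (h _ hm))⟩

theorem sem_while_true {PVar PVal LVar LVal : Type} [DecidableEq PVar]
    (b : (PVar → PVal) → Prop) (C : Cmd PVar PVal)
    (S : Set (EState PVar PVal LVar LVal)) (h : ∀ φ ∈ S, b φ.2) :
    sem (whileCmd b C) S = sem (whileCmd b C) (sem C S) := by
  ext ⟨l, τ⟩
  constructor
  · rintro ⟨σ, hσ, hs⟩
    cases hs with
    | seq h1 h2 =>
      cases h1 with
      | iterNil =>
        cases h2 with
        | assume hb => exact absurd (h _ hσ) hb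
      | @iterCons _ _ ρ _ h3 h4 =>
        cases h3 with
        | seq h5 h6 =>
          cases h5
          exact ⟨ρ, ⟨σ, hσ, h6⟩, BigStep.seq h4 h2⟩
  · rintro ⟨σ, ⟨ρ, hρ, hC⟩, hs⟩
    cases hs with
    | seq h1 h2 =>
      exact ⟨ρ, hρ, BigStep.seq
        (BigStep.iterCons (BigStep.seq (BigStep.assume (h _ hρ)) hC) h1) h2⟩

theorem whileSync_aux {PVar PVal LVar LVal : Type} [DecidableEq PVar]
    (b : (PVar → PVal) → Prop) (C : Cmd PVar PVal)
    (I : HAssn PVar PVal LVar LVal)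
    (hlow : ∀ S : Set (EState PVar PVal LVar LVal),
      I S → ∀ φ ∈ S, ∀ φ' ∈ S, (b φ.2 ↔ b φ'.2))
    (hbody : HyperTriple (fun S => I S ∧ ∀ φ ∈ S, b φ.2) C I)
    (l : LVar → LVal) (D : Cmd PVar PVal) (σ τ : PVar → PVal) (hs : BigStep D σ τ)
    (hD : D = Cmd.iter (Cmd.seq (Cmd.assume b) C)) (hτ : ¬ b τ) :
    ∀ S, I S → (l, σ) ∈ S → I (sem (whileCmd b C) S) := by
  induction hs with
  | iterNil =>
    intro S hI hm
    rw [sem_while_false b C S (fun φ hφ hb => hτ ((hlow S hI _ hφ _ hm).1 hb))]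
    exact hI
  | iterCons h1 h2 _ ih =>
    intro S hI hm
    cases hD
    cases h1 with
    | seq h3 h4 =>
      cases h3 with
      | assume hb =>
        have hall : ∀ φ ∈ S, b φ.2 := fun φ hφ => (hlow S hI _ hm _ hφ).1 hb
        rw [sem_while_true b C S hall]
        exact ih rfl hτ _ (hbody S ⟨hI, hall⟩) ⟨_, hm, h4⟩
  | _ => cases hD

/-- Soundness of the synchronized while rule (WhileSync). -/
theorem whileSync_sound {PVar PVal LVar LVal : Type} [DecidableEq PVar]
    (b : (PVar → PVal) → Prop) (C : Cmd PVar PVal)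
    (I : HAssn PVar PVal LVar LVal)
    (hlow : ∀ S : Set (EState PVar PVal LVar LVal),
      I S → ∀ φ ∈ S, ∀ φ' ∈ S, (b φ.2 ↔ b φ'.2))
    (hbody : HyperTriple (fun S => I S ∧ ∀ φ ∈ S, b φ.2) C I) :
    HyperTriple I (whileCmd b C)
      (fun S => (I S ∨ S = ∅) ∧ ∀ φ ∈ S, ¬ b φ.2) := by
  intro S hI
  constructor
  · rcases Set.eq_empty_or_nonempty (sem (whileCmd b C) S) with h | ⟨⟨l, τ⟩, σ, hσ, hs⟩
    · exact Or.inr h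
    · left
      cases hs with
      | seq h1 h2 =>
        cases h2 with
        | assume hb => exact whileSync_aux b C I hlow hbody l _ _ _ h1 rfl hb S hI hσ
  · rintro ⟨l, τ⟩ ⟨σ, hσ, hs⟩
    cases hs with
    | seq h1 h2 =>
      cases h2 with
      | assume hb => exact hb
end

section
/- Soundness of the While-∀*∃* rule: let b be a predicate on program states expressible as a syntactic Boolean state expression, C a command, I a hyper-assertion, and Q a closed syntactic hyper-assertion in which no universal state quantifier ∀⟨_⟩ occurs within the scope of any existential quantifier (over states or over values); let [Q] denote the hyper-assertion λS. (S satisfies Q). Define if(b){C} := ((assume b) ; C) + (assume(λσ. ¬ b(σ))) and while(b){C} := ((assume b) ; C)* ; assume(λσ. ¬ b(σ)). If the hyper-triples ⊨ {I} if(b){C} {I} and ⊨ {I} assume(λσ. ¬ b(σ)) {[Q]} are valid, then the hyper-triple ⊨ {I} while(b){C} {[Q]} is valid. -/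
/-- Syntactic Boolean state expressions: comparisons of syntactic program expressions
and Boolean connectives. -/
inductive PBExp (PVar Val : Type) : Type where
  | comp : (Val → Val → Prop) → PExp PVar Val → PExp PVar Val → PBExp PVar Val
  | and : PBExp PVar Val → PBExp PVar Val → PBExp PVar Val
  | or : PBExp PVar Val → PBExp PVar Val → PBExp PVar Val
  | not : PBExp PVar Val → PBExp PVar Val

/-- Semantic interpretation ⟦p⟧ of a syntactic Boolean state expression. -/
def PBExp.eval {PVar Val : Type} (σ : PVar → Val) : PBExp PVar Val → Prop
  | .comp r e1 e2 => r (PExp.eval σ e1) (PExp.eval σ e2)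
  | .and b1 b2 => PBExp.eval σ b1 ∧ PBExp.eval σ b2
  | .or b1 b2 => PBExp.eval σ b1 ∨ PBExp.eval σ b2
  | .not b => ¬ PBExp.eval σ b

/-- No universal state quantifier ∀⟨_⟩ occurs anywhere in the assertion. -/
def HAssrt.noForallS {PVar LVar Val : Type} : HAssrt PVar LVar Val → Prop
  | .bconst _ => True
  | .comp _ _ _ => True
  | .conj A B => HAssrt.noForallS A ∧ HAssrt.noForallS B
  | .disj A B => HAssrt.noForallS A ∧ HAssrt.noForallS B
  | .forallV body => ∀ v, HAssrt.noForallS (body v)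
  | .existsV body => ∀ v, HAssrt.noForallS (body v)
  | .forallS _ _ => False
  | .existsS _ A => HAssrt.noForallS A

/-- No universal state quantifier ∀⟨_⟩ occurs within the scope of any existential
quantifier (over states or over values). -/
def HAssrt.noForallSAfterExists {PVar LVar Val : Type} : HAssrt PVar LVar Val → Prop
  | .bconst _ => True
  | .comp _ _ _ => True
  | .conj A B => HAssrt.noForallSAfterExists A ∧ HAssrt.noForallSAfterExists B
  | .disj A B => HAssrt.noForallSAfterExists A ∧ HAssrt.noForallSAfterExists B
  | .forallV body => ∀ v, HAssrt.noForallSAfterExists (body v)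
  | .existsV body => ∀ v, HAssrt.noForallS (body v)
  | .forallS _ A => HAssrt.noForallSAfterExists A
  | .existsS _ A => HAssrt.noForallS A

theorem sat_mono_noForallS {PVar LVar Val : Type} {S T : Set (EState PVar Val LVar Val)}
    (hST : S ⊆ T) (A : HAssrt PVar LVar Val) :
    ∀ env, A.noForallS → HAssrt.sat S env A → HAssrt.sat T env A := by
  induction A with
  | bconst b => intro env _ h; exact h
  | comp r e1 e2 => intro env _ h; exact h
  | conj A B ihA ihB => intro env hn h; exact ⟨ihA env hn.1 h.1, ihB env hn.2 h.2⟩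
  | disj A B ihA ihB => intro env hn h; exact h.imp (ihA env hn.1) (ihB env hn.2)
  | forallV body ih => intro env hn h v; exact ih v env (hn v) (h v)
  | existsV body ih =>
    intro env hn h
    obtain ⟨v, hv⟩ := h
    exact ⟨v, ih v env (hn v) hv⟩
  | forallS n A ih => intro env hn h; exact hn.elim
  | existsS n A ih =>
    intro env hn h
    obtain ⟨α, hα, h⟩ := h
    exact ⟨α, hST hα, ih _ hn h⟩

theorem sat_iUnion_of_frequently {PVar LVar Val : Type}
    {T : ℕ → Set (EState PVar Val LVar Val)} (hT : Monotone T) (A : HAssrt PVar LVar Val) :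
    ∀ env, A.noForallSAfterExists → (∃ᶠ n in Filter.atTop, HAssrt.sat (T n) env A) →
      HAssrt.sat (⋃ n, T n) env A := by
  induction A with
  | bconst b => intro env _ h; exact h.exists.choose_spec
  | comp r e1 e2 => intro env _ h; exact h.exists.choose_spec
  | conj A B ihA ihB =>
    intro env hn h
    exact ⟨ihA env hn.1 (h.mono fun _ h => h.1), ihB env hn.2 (h.mono fun _ h => h.2)⟩
  | disj A B ihA ihB =>
    intro env hn h
    exact (Filter.frequently_or_distrib.1 h).imp (ihA env hn.1) (ihB env hn.2)
  | forallV body ih =>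
    intro env hn h v
    exact ih v env (hn v) (h.mono fun _ h => h v)
  | existsV body ih =>
    intro env hn h
    obtain ⟨n, h⟩ := h.exists
    exact sat_mono_noForallS (Set.subset_iUnion T n) (.existsV body) env hn h
  | forallS k A ih =>
    intro env hn h α hα
    obtain ⟨m, hm⟩ := Set.mem_iUnion.1 hα
    refine ih _ hn ((h.and_eventually (Filter.eventually_ge_atTop m)).mono ?_)
    rintro n ⟨h1, h2⟩
    exact h1 α (hT h2 hm)
  | existsS k A ih =>
    intro env hn h
    obtain ⟨n, h⟩ := h.exists
    exact sat_mono_noForallS (Set.subset_iUnion T n) (.existsS k A) env hn h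

/-- Iterating the conditional. -/
def ifIter {PVar Val LVar : Type} [DecidableEq PVar] (b : (PVar → Val) → Prop)
    (C : Cmd PVar Val) (S : Set (EState PVar Val LVar Val)) :
    ℕ → Set (EState PVar Val LVar Val)
  | 0 => S
  | n + 1 => sem (ifCmd b C) (ifIter b C S n)

theorem iter_mem_ifIter {PVar Val LVar : Type} [DecidableEq PVar] (b : (PVar → Val) → Prop)
    (C : Cmd PVar Val) (S : Set (EState PVar Val LVar Val)) (l : LVar → Val)
    {D : Cmd PVar Val} {σ σ' : PVar → Val} (h : BigStep D σ σ') :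
    D = Cmd.iter (Cmd.seq (Cmd.assume b) C) → ∀ n, (l, σ) ∈ ifIter b C S n →
      ∃ m, (l, σ') ∈ ifIter b C S m := by
  induction h with
  | iterNil => intro _ n hn; exact ⟨n, hn⟩
  | iterCons h1 h2 ih1 ih2 =>
    intro e n hn
    refine ih2 e (n + 1) ⟨_, hn, ?_⟩
    cases e
    exact BigStep.choiceL h1
  | _ => intro e; cases e

theorem ifIter_while {PVar Val LVar : Type} [DecidableEq PVar] (b : (PVar → Val) → Prop)
    (C : Cmd PVar Val) (S : Set (EState PVar Val LVar Val)) (l : LVar → Val)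
    (σ' : PVar → Val) (n : ℕ) :
    ∀ σ, (l, σ) ∈ ifIter b C S n → BigStep (whileCmd b C) σ σ' →
      (l, σ') ∈ sem (whileCmd b C) S := by
  induction n with
  | zero => intro σ h hw; exact ⟨σ, h, hw⟩
  | succ n ih =>
    rintro σ ⟨σ0, h0, hs⟩ hw
    refine ih σ0 h0 ?_
    cases hs with
    | choiceL hs =>
      cases hw with
      | seq h1 h2 => exact BigStep.seq (BigStep.iterCons hs h1) h2
    | choiceR hs =>
      generalize hx : ((l, σ) : EState PVar Val LVar Val).2 = x at hs
      cases hs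
      cases hx
      exact hw

theorem sem_while_eq {PVar Val LVar : Type} [DecidableEq PVar] (b : (PVar → Val) → Prop)
    (C : Cmd PVar Val) (S : Set (EState PVar Val LVar Val)) :
    sem (whileCmd b C) S = ⋃ n, sem (Cmd.assume (fun σ => ¬ b σ)) (ifIter b C S n) := by
  ext ⟨l, σ'⟩
  rw [Set.mem_iUnion]
  constructor
  · rintro ⟨σ, hσ, hw⟩
    cases hw with
    | seq h1 h2 =>
      obtain ⟨m, hm⟩ := iter_mem_ifIter b C S l h1 rfl 0 hσ
      exact ⟨m, _, hm, h2⟩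
  · rintro ⟨n, σ, hσ, h2⟩
    exact ifIter_while b C S l σ' n σ hσ (BigStep.seq BigStep.iterNil h2)

/-- Soundness of the While-∀*∃* rule. -/
theorem while_forall_exists_sound {PVar LVar Val : Type} [DecidableEq PVar]
    (b : (PVar → Val) → Prop) (p : PBExp PVar Val)
    (hb : ∀ σ : PVar → Val, b σ ↔ PBExp.eval σ p)
    (C : Cmd PVar Val)
    (I : HAssn PVar Val LVar Val)
    (Q : HAssrt PVar LVar Val) (hclosed : Q.Closed)
    (hQ : Q.noForallSAfterExists)
    (env : ℕ → EState PVar Val LVar Val)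
    (hinv : HyperTriple I (ifCmd b C) I)
    (hexit : HyperTriple I (Cmd.assume (fun σ => ¬ b σ))
      (fun S => HAssrt.sat S env Q)) :
    HyperTriple I (whileCmd b C) (fun S => HAssrt.sat S env Q) := by
  intro S hS
  have hI : ∀ n, I (ifIter b C S n) := by
    intro n
    induction n with
    | zero => exact hS
    | succ n ih => exact hinv _ ih
  show HAssrt.sat (sem (whileCmd b C) S) env Q
  rw [sem_while_eq]
  refine sat_iUnion_of_frequently (monotone_nat_of_le_succ ?_) Q env hQ
    (Filter.Frequently.of_forall fun n => hexit _ (hI n))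
  rintro n ⟨l, σ'⟩ ⟨σ, hσ, h⟩
  refine ⟨σ', ⟨σ, hσ, BigStep.choiceR h⟩, ?_⟩
  generalize hx : ((l, σ') : EState PVar Val LVar Val).2 = x at h
  cases h with
  | assume h =>
    cases hx
    exact BigStep.assume h
end

section
/- Soundness of the While-∃ rule: let b be a predicate on program states, C a command, ≺ a well-founded relation on a type α, e a function from extended states to α, and P, Q families of hyper-assertions indexed by extended states. Define if(b){C} := ((assume b) ; C) + (assume(λσ. ¬ b(σ))) and while(b){C} := ((assume b) ; C)* ; assume(λσ. ¬ b(σ)). Suppose (i) for every v : α, the hyper-triple ⊨ {λS. ∃φ ∈ S, P_φ(S) ∧ b(φ^P) ∧ e(φ) = v} if(b){C} {λS. ∃φ ∈ S, P_φ(S) ∧ e(φ) ≺ v} is valid, and (ii) for every extended state φ, the hyper-triple ⊨ {P_φ} while(b){C} {Q_φ} is valid. Then the hyper-triple ⊨ {λS. ∃φ ∈ S, P_φ(S)} while(b){C} {λS. ∃φ ∈ S, Q_φ(S)} is valid. -/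
theorem sem_while_if {PVar PVal LVar LVal : Type} [DecidableEq PVar]
    (b : (PVar → PVal) → Prop) (C : Cmd PVar PVal)
    (S : Set (EState PVar PVal LVar LVal)) :
    sem (whileCmd b C) (sem (ifCmd b C) S) = sem (whileCmd b C) S := by
  ext φ
  constructor
  · rintro ⟨σ', ⟨σ, hσ, hif⟩, hw⟩
    refine ⟨σ, hσ, ?_⟩
    cases hif with
    | choiceL h =>
      cases hw with
      | seq h1 h2 => exact BigStep.seq (BigStep.iterCons h h1) h2
    | choiceR h =>
      cases h
      exact hw
  · rintro ⟨σ, hσ, hw⟩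
    cases hw with
    | seq h1 h2 =>
      cases h1 with
      | iterNil =>
        exact ⟨σ, ⟨σ, hσ, BigStep.choiceR (by cases h2; exact BigStep.assume ‹_›)⟩,
          BigStep.seq BigStep.iterNil h2⟩
      | @iterCons _ _ τ _ h h1 =>
        exact ⟨τ, ⟨σ, hσ, BigStep.choiceL h⟩, BigStep.seq h1 h2⟩

/-- Soundness of the While-∃ rule. -/
theorem while_exists_sound {PVar PVal LVar LVal : Type} [DecidableEq PVar]
    {α : Type} (lt : α → α → Prop) (hwf : WellFounded lt)
    (b : (PVar → PVal) → Prop) (C : Cmd PVar PVal)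
    (e : EState PVar PVal LVar LVal → α)
    (P Q : EState PVar PVal LVar LVal → HAssn PVar PVal LVar LVal)
    (hvariant : ∀ v : α,
      HyperTriple
        (fun S => ∃ φ ∈ S, P φ S ∧ b φ.2 ∧ e φ = v)
        (ifCmd b C)
        (fun S => ∃ φ ∈ S, P φ S ∧ lt (e φ) v))
    (hrest : ∀ φ : EState PVar PVal LVar LVal,
      HyperTriple (P φ) (whileCmd b C) (Q φ)) :
    HyperTriple
      (fun S => ∃ φ ∈ S, P φ S)
      (whileCmd b C)
      (fun S => ∃ φ ∈ S, Q φ S) := by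
  have key : ∀ v : α, ∀ S, (∃ φ ∈ S, P φ S ∧ e φ = v) →
      ∃ φ ∈ sem (whileCmd b C) S, Q φ (sem (whileCmd b C) S) := by
    intro v
    induction v using hwf.induction with
    | _ v ih =>
      rintro S ⟨φ, hφ, hP, hv⟩
      by_cases hb : b φ.2
      · obtain ⟨ψ, hψ, hPψ, hlt⟩ := hvariant v S ⟨φ, hφ, hP, hb, hv⟩
        have := ih _ hlt _ ⟨ψ, hψ, hPψ, rfl⟩
        rwa [sem_while_if] at this
      · exact ⟨φ, ⟨φ.2, hφ, BigStep.seq BigStep.iterNil (BigStep.assume hb)⟩,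
          hrest φ S hP⟩
  rintro S ⟨φ, hφ, hP⟩
  exact key (e φ) S ⟨φ, hφ, hP, rfl⟩
end

section
/- Synchronous if rule: let x be a logical variable and assume LVals contains two distinct values denoted 1 and 2. Let C, C1, C2, C1', C2' be commands and P, P1, P2, R1, R2, Q1, Q2 hyper-assertions. If (1) ⊨ {P} C1 {P1}, (2) ⊨ {P} C2 {P2}, (3) ⊨ {P1 ⊗_{x=1,2} P2} C {R1 ⊗_{x=1,2} R2}, (4) ⊨ {R1} C1' {Q1}, (5) ⊨ {R2} C2' {Q2}, and (6) P1, P2, R1, R2 are insensitive to the logical variable x, then the hyper-triple ⊨ {P} (C1 ; C ; C1') + (C2 ; C ; C2') {Q1 ⊗ Q2} is valid. -/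
/-- The ⊗_{x=1,2} operator: A holds of the states tagged with value `one` for the
logical variable x, and B holds of those tagged with `two`. -/
def otimesTag {PVar PVal LVar LVal : Type} (x : LVar) (one two : LVal)
    (A B : HAssn PVar PVal LVar LVal) : HAssn PVar PVal LVar LVal :=
  fun S => A { φ ∈ S | φ.1 x = one } ∧ B { φ ∈ S | φ.1 x = two }

/-- A hyper-assertion is insensitive to the logical variable x iff its truth value on a
set is unchanged when the value of x in the logical state of each state of the set is
replaced arbitrarily. -/
def InsensAssn {PVar PVal LVar LVal : Type} [DecidableEq LVar] (x : LVar)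
    (A : HAssn PVar PVal LVar LVal) : Prop :=
  ∀ (S : Set (EState PVar PVal LVar LVal)) (g : EState PVar PVal LVar LVal → LVal),
    A S ↔ A ((fun φ => (Function.update φ.1 x (g φ), φ.2)) '' S)

theorem aux_sem_tag {PVar PVal LVar LVal : Type} [DecidableEq PVar] [DecidableEq LVar]
    (x : LVar) (v : LVal) (C : Cmd PVar PVal) (A : Set (EState PVar PVal LVar LVal)) :
    sem C ((fun φ => (Function.update φ.1 x v, φ.2)) '' A)
      = (fun φ => (Function.update φ.1 x v, φ.2)) '' (sem C A) := by
  ext ⟨l, p⟩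
  constructor
  · rintro ⟨σ, ⟨⟨l', p'⟩, hA, he⟩, hs⟩
    simp only [Prod.mk.injEq] at he
    obtain ⟨rfl, rfl⟩ := he
    exact ⟨(l', p), ⟨p', hA, hs⟩, rfl⟩
  · rintro ⟨⟨l', p'⟩, ⟨σ, hA, hs⟩, he⟩
    simp only [Prod.mk.injEq] at he
    obtain ⟨rfl, rfl⟩ := he
    exact ⟨σ, ⟨(l', σ), hA, rfl⟩, hs⟩

theorem aux_sem_union {PVar PVal LVar LVal : Type} [DecidableEq PVar]
    (C : Cmd PVar PVal) (A B : Set (EState PVar PVal LVar LVal)) :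
    sem C (A ∪ B) = sem C A ∪ sem C B := by
  ext φ
  simp only [sem, Set.mem_ofPred_eq, Set.mem_union, or_and_right, exists_or]

theorem aux_filter_left {PVar PVal LVar LVal : Type} [DecidableEq LVar]
    (x : LVar) (v w : LVal) (h : v ≠ w) (A B : Set (EState PVar PVal LVar LVal)) :
    { φ ∈ ((fun φ : EState PVar PVal LVar LVal => (Function.update φ.1 x v, φ.2)) '' A) ∪
      ((fun φ : EState PVar PVal LVar LVal => (Function.update φ.1 x w, φ.2)) '' B) | φ.1 x = v }
      = (fun φ : EState PVar PVal LVar LVal => (Function.update φ.1 x v, φ.2)) '' A := by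
  ext φ
  constructor
  · rintro ⟨h1 | ⟨ψ, _, rfl⟩, h2⟩
    · exact h1
    · simp at h2
      exact absurd h2.symm h
  · rintro ⟨ψ, hψ, rfl⟩
    exact ⟨Or.inl ⟨ψ, hψ, rfl⟩, by simp⟩

theorem aux_sem_seq {PVar PVal LVar LVal : Type} [DecidableEq PVar]
    (C D : Cmd PVar PVal) (A : Set (EState PVar PVal LVar LVal)) :
    sem (Cmd.seq C D) A = sem D (sem C A) := by
  ext φ
  constructor
  · rintro ⟨σ, hA, hs⟩
    cases hs with
    | @seq _ _ _ τ _ a b => exact Exists.intro τ (And.intro (show (φ.1, τ) ∈ sem C A from Exists.intro σ (And.intro hA a)) b)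
  · rintro ⟨σ, ⟨τ, hA, a⟩, b⟩
    exact ⟨τ, hA, BigStep.seq a b⟩

theorem aux_sem_choice {PVar PVal LVar LVal : Type} [DecidableEq PVar]
    (C D : Cmd PVar PVal) (A : Set (EState PVar PVal LVar LVal)) :
    sem (Cmd.choice C D) A = sem C A ∪ sem D A := by
  ext φ
  constructor
  · rintro ⟨σ, hA, hs⟩
    cases hs with
    | choiceL a => exact Or.inl ⟨σ, hA, a⟩
    | choiceR a => exact Or.inr ⟨σ, hA, a⟩
  · rintro (⟨σ, hA, a⟩ | ⟨σ, hA, a⟩)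
    · exact ⟨σ, hA, BigStep.choiceL a⟩
    · exact ⟨σ, hA, BigStep.choiceR a⟩

/-- Synchronous if rule. -/
theorem synchronous_if_rule {PVar PVal LVar LVal : Type}
    [DecidableEq PVar] [DecidableEq LVar]
    (x : LVar) (one two : LVal) (h12 : one ≠ two)
    (C C1 C2 C1' C2' : Cmd PVar PVal)
    (P P1 P2 R1 R2 Q1 Q2 : HAssn PVar PVal LVar LVal)
    (h1 : HyperTriple P C1 P1)
    (h2 : HyperTriple P C2 P2)
    (h3 : HyperTriple (otimesTag x one two P1 P2) C (otimesTag x one two R1 R2))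
    (h4 : HyperTriple R1 C1' Q1)
    (h5 : HyperTriple R2 C2' Q2)
    (hP1 : InsensAssn x P1) (hP2 : InsensAssn x P2)
    (hR1 : InsensAssn x R1) (hR2 : InsensAssn x R2) :
    HyperTriple P
      (Cmd.choice (Cmd.seq C1 (Cmd.seq C C1')) (Cmd.seq C2 (Cmd.seq C C2')))
      (otimes Q1 Q2) := by
  intro S hS
  have key := h3 (((fun φ => (Function.update φ.1 x one, φ.2)) '' sem C1 S) ∪
    ((fun φ => (Function.update φ.1 x two, φ.2)) '' sem C2 S)) (by
      constructor
      · rw [aux_filter_left x one two h12]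
        exact (hP1 _ (fun _ => one)).1 (h1 S hS)
      · rw [Set.union_comm, aux_filter_left x two one h12.symm]
        exact (hP2 _ (fun _ => two)).1 (h2 S hS))
  rw [aux_sem_union, aux_sem_tag, aux_sem_tag] at key
  obtain ⟨k1, k2⟩ := key
  rw [aux_filter_left x one two h12] at k1
  rw [Set.union_comm, aux_filter_left x two one h12.symm] at k2
  refine ⟨_, _, ?_, h4 _ ((hR1 _ (fun _ => one)).2 k1), h5 _ ((hR2 _ (fun _ => two)).2 k2)⟩
  simp only [aux_sem_choice, aux_sem_seq]
end
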